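/- Let d ≥ 2 and let K be a convex body in ℝ^d with diameter D = diam(K). Let 0 < ε ≤ 1, let y ∈ ℝ^d satisfy ‖y‖ = ε, and suppose the origin is the point of K nearest to y (so dist(y, K) = ε). Set N = y/ε and let β ∈ [0, π/2) be defined by cos β = D/√(D² + ε²). Then every unit vector u with ⟨u, N⟩ ≥ cos(β/2) satisfies h(K^y, u) − h(K, u) ≥ D·sin(β/2). -/

import Mathlib

open Metric Set
open scoped InnerProductSpace

/-- The support function of a set `K`: `h(K, u) = sup_{x ∈ K} ⟪x, u⟫`. -/
noncomputable def suppFn {d : ℕ} (K : Set (EuclideanSpace ℝ (Fin d)))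
    (u : EuclideanSpace ℝ (Fin d)) : ℝ :=
  sSup ((fun x => ⟪x, u⟫_ℝ) '' K)

theorem inner_le_suppFn {d : ℕ} {K : Set (EuclideanSpace ℝ (Fin d))} (hK : Bornology.IsBounded K)
    {x : EuclideanSpace ℝ (Fin d)} (hx : x ∈ K) (u : EuclideanSpace ℝ (Fin d)) :
    ⟪x, u⟫_ℝ ≤ suppFn K u := by
  obtain ⟨R, hR⟩ := hK.exists_norm_le
  refine le_csSup ⟨R * ‖u‖, ?_⟩ (mem_image_of_mem _ hx)
  rintro _ ⟨z, hz, rfl⟩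
  exact (real_inner_le_norm z u).trans (mul_le_mul_of_nonneg_right (hR z hz) (norm_nonneg u))

/-- If `0` is a point of the convex set `K` nearest to `y`, then `K` lies in the half-space
`{x | ⟪y, x⟫ ≤ 0}`. -/
theorem inner_nonpos_of_zero_nearest {E : Type*} [NormedAddCommGroup E] [InnerProductSpace ℝ E]
    {K : Set E} (hK : Convex ℝ K) (h0 : (0 : E) ∈ K) {y : E}
    (hy : ∀ z ∈ K, ‖y‖ ≤ dist y z) {x : E} (hx : x ∈ K) : ⟪y, x⟫_ℝ ≤ 0 := by
  have : Nonempty K := ⟨⟨0, h0⟩⟩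
  have hinf : ‖y - 0‖ = ⨅ w : K, ‖y - w‖ := by
    refine le_antisymm (le_ciInf fun w => ?_) (ciInf_le ⟨0, ?_⟩ (⟨0, h0⟩ : K))
    · simpa [dist_eq_norm] using hy w w.2
    · rintro _ ⟨w, rfl⟩
      exact norm_nonneg _
  simpa using (norm_eq_iInf_iff_real_inner_le_zero hK h0).1 hinf x hx

/-- A unit vector `u` making an angle at most `b` with the unit vector `N` satisfies
`⟪x, u⟫ ≤ ‖x‖ sin b` for every `x` in the half-space `⟪N, x⟫ ≤ 0`. -/
theorem inner_le_norm_mul_sin_of_inner_nonpos {E : Type*} [NormedAddCommGroup E]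
    [InnerProductSpace ℝ E] {N u x : E} {b : ℝ} (hN : ‖N‖ = 1) (hu : ‖u‖ = 1)
    (hc : 0 ≤ Real.cos b) (hs : 0 ≤ Real.sin b) (huN : Real.cos b ≤ ⟪u, N⟫_ℝ)
    (hx : ⟪N, x⟫_ℝ ≤ 0) : ⟪x, u⟫_ℝ ≤ ‖x‖ * Real.sin b := by
  set t := ⟪u, N⟫_ℝ with ht
  have hw : ‖u - t • N‖ ≤ Real.sin b := by
    have hsq : ‖u - t • N‖ ^ 2 = 1 - t ^ 2 := by
      rw [norm_sub_sq_real, inner_smul_right, norm_smul, hu, hN, ← ht, Real.norm_eq_abs,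
        mul_one, sq_abs]
      ring
    refine abs_le_of_sq_le_sq' ?_ hs |>.2
    rw [hsq]
    nlinarith [Real.sin_sq_add_cos_sq b]
  have hsplit : ⟪x, u⟫_ℝ = t * ⟪N, x⟫_ℝ + ⟪x, u - t • N⟫_ℝ := by
    rw [inner_sub_right, inner_smul_right, real_inner_comm x N]
    ring
  have hcs := real_inner_le_norm x (u - t • N)
  have hmul := mul_le_mul_of_nonneg_left hw (norm_nonneg x)
  have hneg := mul_nonpos_of_nonneg_of_nonpos (hc.trans huN) hx
  linarith

/-- If `tan β = ε / D`, then `2 D sin (β / 2) ≤ ε cos (β / 2)`. -/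
theorem two_mul_sin_half_le_mul_cos_half {D ε β : ℝ} (hD : 0 ≤ D) (hε : 0 < ε) (hβ0 : 0 ≤ β)
    (hβ1 : β < Real.pi / 2) (hcos : Real.cos β = D / Real.sqrt (D ^ 2 + ε ^ 2)) :
    2 * D * Real.sin (β / 2) ≤ ε * Real.cos (β / 2) := by
  have hcpos : 0 < Real.cos β := Real.cos_pos_of_mem_Ioo ⟨by linarith [Real.pi_pos], hβ1⟩
  have hs : 0 ≤ Real.sin (β / 2) :=
    Real.sin_nonneg_of_nonneg_of_le_pi (by linarith) (by linarith [Real.pi_pos])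
  have hr : 0 < Real.sqrt (D ^ 2 + ε ^ 2) := Real.sqrt_pos.2 (by positivity)
  have hr2 : Real.sqrt (D ^ 2 + ε ^ 2) ^ 2 = D ^ 2 + ε ^ 2 := Real.sq_sqrt (by positivity)
  have hsin : Real.sin β = ε / Real.sqrt (D ^ 2 + ε ^ 2) := by
    have hsβ : 0 ≤ Real.sin β :=
      Real.sin_nonneg_of_nonneg_of_le_pi hβ0 (by linarith [Real.pi_pos])
    rw [← sq_eq_sq₀ hsβ (by positivity), Real.sin_sq, hcos, div_pow, div_pow, hr2]
    field_simp
    ring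
  have htan : ε * Real.cos β = D * Real.sin β := by
    rw [hcos, hsin]
    ring
  have hsin2 : Real.sin β = 2 * Real.sin (β / 2) * Real.cos (β / 2) := by
    rw [← Real.sin_two_mul, mul_div_cancel₀ β two_ne_zero]
  have hcos2 : Real.cos β = 2 * Real.cos (β / 2) ^ 2 - 1 := by
    rw [← Real.cos_two_mul, mul_div_cancel₀ β two_ne_zero]
  have hle : Real.cos β ≤ Real.cos (β / 2) ^ 2 := by
    linarith [Real.cos_sq_le_one (β / 2)]
  refine le_of_mul_le_mul_right ?_ hcpos
  calc 2 * D * Real.sin (β / 2) * Real.cos β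
      ≤ 2 * D * Real.sin (β / 2) * Real.cos (β / 2) ^ 2 :=
        mul_le_mul_of_nonneg_left hle (by positivity)
    _ = D * Real.sin β * Real.cos (β / 2) := by rw [hsin2]; ring
    _ = ε * Real.cos (β / 2) * Real.cos β := by rw [← htan]; ring

theorem statement9 {d : ℕ} (hd : 2 ≤ d) (K : Set (EuclideanSpace ℝ (Fin d)))
    (hKcomp : IsCompact K) (hKconv : Convex ℝ K) (hKint : (interior K).Nonempty)
    (ε : ℝ) (hε0 : 0 < ε) (hε1 : ε ≤ 1)
    (y : EuclideanSpace ℝ (Fin d)) (hynorm : ‖y‖ = ε)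
    (h0K : (0 : EuclideanSpace ℝ (Fin d)) ∈ K)
    (hnearest : ∀ z ∈ K, ε ≤ dist y z)
    (β : ℝ) (hβ0 : 0 ≤ β) (hβ1 : β < Real.pi / 2)
    (hcosβ : Real.cos β = diam K / Real.sqrt ((diam K) ^ 2 + ε ^ 2)) :
    ∀ u : EuclideanSpace ℝ (Fin d), ‖u‖ = 1 →
      Real.cos (β / 2) ≤ ⟪u, ε⁻¹ • y⟫_ℝ →
      diam K * Real.sin (β / 2) ≤ suppFn (convexHull ℝ (K ∪ {y})) u - suppFn K u := by
  intro u hu huN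
  have hpi := Real.pi_pos
  have hc : 0 ≤ Real.cos (β / 2) := Real.cos_nonneg_of_mem_Icc ⟨by linarith, by linarith⟩
  have hs : 0 ≤ Real.sin (β / 2) := Real.sin_nonneg_of_nonneg_of_le_pi (by linarith) (by linarith)
  have hN : ‖ε⁻¹ • y‖ = 1 := by
    rw [norm_smul, hynorm, norm_inv, Real.norm_of_nonneg hε0.le, inv_mul_cancel₀ hε0.ne']
  have hK : suppFn K u ≤ diam K * Real.sin (β / 2) := by
    refine csSup_le (Nonempty.image _ ⟨0, h0K⟩) ?_
    rintro _ ⟨x, hx, rfl⟩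
    have hyx : ⟪ε⁻¹ • y, x⟫_ℝ ≤ 0 := by
      rw [real_inner_smul_left]
      exact mul_nonpos_of_nonneg_of_nonpos (inv_nonneg.2 hε0.le)
        (inner_nonpos_of_zero_nearest hKconv h0K (hynorm ▸ hnearest) hx)
    refine (inner_le_norm_mul_sin_of_inner_nonpos hN hu hc hs huN hyx).trans
      (mul_le_mul_of_nonneg_right ?_ hs)
    simpa using dist_le_diam_of_mem hKcomp.isBounded hx h0K
  have hy : ε * Real.cos (β / 2) ≤ suppFn (convexHull ℝ (K ∪ {y})) u := by
    have hbdd : Bornology.IsBounded (convexHull ℝ (K ∪ {y})) :=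
      isBounded_convexHull.2 (hKcomp.isBounded.union Bornology.isBounded_singleton)
    refine le_trans ?_ (inner_le_suppFn hbdd (subset_convexHull ℝ _ (Or.inr rfl)) u)
    rw [real_inner_smul_right, real_inner_comm] at huN
    calc ε * Real.cos (β / 2) ≤ ε * (ε⁻¹ * ⟪y, u⟫_ℝ) := mul_le_mul_of_nonneg_left huN hε0.le
      _ = ⟪y, u⟫_ℝ := mul_inv_cancel_left₀ hε0.ne' _
  have htrig := two_mul_sin_half_le_mul_cos_half diam_nonneg hε0 hβ0 hβ1 hcosβ
  linarith
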